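/- Fix reals d and k with 2 ≤ k ≤ (1 − 1/√2)·d. Then for all 0 ≤ α ≤ 1, (d/2)·[ h((2k/d)·α) + 2 h(α − (2k/d)·α) + h(1 − 2α + (2k/d)·α) ] − (d − 1)·[ h(α) + h(1 − α) ] ≤ α·(k log d + 1) + h(α)·(1 − k) + (d/2)·α³. -/

import Mathlib

/-!
Upper bound for the entropy functional.
-/

noncomputable section

/-- `h(x) = -x log x`, with `h(0) = 0` (automatic since `Real.log 0 = 0`). -/
def h (x : ℝ) : ℝ := -(x * Real.log x)

/-!
Put `b = 2k/d`. Multiplicativity, `h (x * y) = y * h x + x * h y`, splits the first two entropies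
into a multiple of `h α` and a multiple of `α`, so only `h (1 - (2 - b) * α) - 2 * h (1 - α)`
needs second-order care. There `h (1 - y) ≤ y - y² / 2` and `h (1 - x) ≥ x - x² / 2 - x³ / 2`;
the hypothesis on `k` says `2 - b ≥ √2`, which is exactly what makes the quadratic terms
`α² - ((2 - b) * α)² / 2` nonpositive. For `h (1 - b)` and the single leftover `h (1 - α)` the
first-order bound `h (1 - x) ≤ x` is enough, and the linear terms exceed the claimed ones by
`α * k * (1 - log (2 * k))`, which is nonpositive once `2 * k ≥ e`.
-/

section EntropyTerm

open Real

lemma h_eq_negMulLog : h = negMulLog := negMulLog_eq_neg.symm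

lemma negMulLog_neg (x : ℝ) : negMulLog (-x) = -negMulLog x := by
  simp [negMulLog]

lemma mul_negMulLog_div (x : ℝ) {y : ℝ} (hy : y ≠ 0) :
    y * negMulLog (x / y) = x * (log y - log x) := by
  rcases eq_or_ne x 0 with rfl | hx
  · simp
  rw [negMulLog, log_div hx hy]
  field_simp
  ring

lemma negMulLog_mul_add_two_mul_negMulLog_sub_mul (b x : ℝ) :
    negMulLog (b * x) + 2 * negMulLog (x - b * x)
      = (2 - b) * negMulLog x + x * (negMulLog b + 2 * negMulLog (1 - b)) := by
  rw [← one_sub_mul, negMulLog_mul, negMulLog_mul]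
  ring

lemma negMulLog_one_sub_le {x : ℝ} (hx : x ≤ 1) : negMulLog (1 - x) ≤ x :=
  (negMulLog_le_one_sub_self (sub_nonneg.2 hx)).trans_eq (sub_sub_cancel 1 x)

lemma neg_log_le_inv_sub_self_div_two {x : ℝ} (hx0 : 0 < x) (hx1 : x ≤ 1) :
    -log x ≤ (x⁻¹ - x) / 2 := by
  simpa only [sinh_eq, neg_neg, exp_neg, exp_log hx0] using
    self_le_sinh_iff.2 (neg_nonneg.2 (log_nonpos hx0.le hx1))

-- For negative `x` this relies on `log x = log |x|`, which makes `negMulLog` odd.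
lemma negMulLog_le_one_sub_sq_div_two {x : ℝ} (hx : |x| ≤ 1) :
    negMulLog x ≤ (1 - x ^ 2) / 2 := by
  obtain ⟨hx_lower, hx_upper⟩ := abs_le.1 hx
  rcases le_or_gt x 0 with hx0 | hx0
  · have h_nonneg : 0 ≤ negMulLog (-x) := negMulLog_nonneg (by linarith) (by linarith)
    rw [negMulLog_neg] at h_nonneg
    nlinarith
  · calc negMulLog x = x * -log x := by rw [negMulLog]; ring
      _ ≤ x * ((x⁻¹ - x) / 2) := by gcongr; exact neg_log_le_inv_sub_self_div_two hx0 hx_upper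
      _ = (1 - x ^ 2) / 2 := by field_simp

lemma sum_range_pow_div_le_neg_log_one_sub {x : ℝ} (hx0 : 0 ≤ x) (hx1 : x < 1) (n : ℕ) :
    ∑ i ∈ Finset.range n, x ^ (i + 1) / (i + 1) ≤ -log (1 - x) :=
  sum_le_hasSum _ (fun _ _ ↦ by positivity)
    (hasSum_pow_div_log_of_abs_lt_one (by rwa [abs_of_nonneg hx0]))

lemma one_sub_mul_le_negMulLog_one_sub {x : ℝ} (hx0 : 0 ≤ x) (hx1 : x ≤ 1) :
    (1 - x) * (x + x ^ 2 / 2) ≤ negMulLog (1 - x) := by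
  rcases hx1.eq_or_lt with rfl | hx1
  · simp
  have h_log : x + x ^ 2 / 2 ≤ -log (1 - x) := by
    simpa [Finset.sum_range_succ, one_add_one_eq_two] using
      sum_range_pow_div_le_neg_log_one_sub hx0 hx1 2
  calc (1 - x) * (x + x ^ 2 / 2) ≤ (1 - x) * -log (1 - x) :=
        mul_le_mul_of_nonneg_left h_log (sub_nonneg.2 hx1.le)
    _ = negMulLog (1 - x) := by rw [negMulLog]; ring

lemma negMulLog_one_sub_mul_sub_two_mul_le {c x : ℝ} (hc : √2 ≤ c) (hx0 : 0 ≤ x) (hx1 : x ≤ 1)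
    (hcx : c * x ≤ 2) :
    negMulLog (1 - c * x) - 2 * negMulLog (1 - x) ≤ x ^ 3 - (2 - c) * x := by
  have hcx0 : 0 ≤ c * x := mul_nonneg ((sqrt_nonneg 2).trans hc) hx0
  have h_upper : negMulLog (1 - c * x) ≤ (1 - (1 - c * x) ^ 2) / 2 :=
    negMulLog_le_one_sub_sq_div_two (abs_le.2 ⟨by linarith, by linarith⟩)
  have h_lower : (1 - x) * (x + x ^ 2 / 2) ≤ negMulLog (1 - x) :=
    one_sub_mul_le_negMulLog_one_sub hx0 hx1
  have h_quadratic : 2 * x ^ 2 ≤ c ^ 2 * x ^ 2 := by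
    gcongr
    exact (sqrt_le_left ((sqrt_nonneg 2).trans hc)).1 hc
  linarith

lemma pos_of_pos_of_le_one_sub_one_div_sqrt_two_mul {d k : ℝ} (hk : 0 < k)
    (hkd : k ≤ (1 - 1 / √2) * d) : 0 < d := by
  have h_coeff : 0 ≤ 1 - 1 / √2 :=
    sub_nonneg.2 (div_le_one_of_le₀ one_lt_sqrt_two.le (sqrt_nonneg 2))
  exact pos_of_mul_pos_right (hk.trans_le hkd) h_coeff

lemma sqrt_two_le_two_sub_two_mul_div {d k : ℝ} (hd : 0 < d) (hkd : k ≤ (1 - 1 / √2) * d) :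
    √2 ≤ 2 - 2 * k / d := by
  have h_ratio : 2 * k / d ≤ 2 * (1 - 1 / √2) := by
    rw [div_le_iff₀ hd]
    linarith
  have h_sqrt : 2 * (1 / √2) = √2 := by rw [mul_one_div, div_sqrt]
  linarith

theorem entropy_term_upper_bound_general {d k α : ℝ} (hk : 0 < k) (hkd : k ≤ (1 - 1 / √2) * d)
    (hα0 : 0 ≤ α) (hα1 : α ≤ 1) :
    d / 2 * (h (2 * k / d * α) + 2 * h (α - 2 * k / d * α)
        + h (1 - 2 * α + 2 * k / d * α))
      - (d - 1) * (h α + h (1 - α))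
      ≤ α * (k * (log d + 1 - log (2 * k)) + 1) + h α * (1 - k) + d / 2 * α ^ 3 := by
  have hd : 0 < d := pos_of_pos_of_le_one_sub_one_div_sqrt_two_mul hk hkd
  have hc : √2 ≤ 2 - 2 * k / d := sqrt_two_le_two_sub_two_mul_div hd hkd
  have h_scale : d * negMulLog (2 * k / d) = 2 * k * (log d - log (2 * k)) :=
    mul_negMulLog_div (2 * k) hd.ne'
  have hdb : d * (2 * k / d) = 2 * k := mul_div_cancel₀ _ hd.ne'
  have hb0 : 0 ≤ 2 * k / d := by positivity
  rw [h_eq_negMulLog]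
  set b := 2 * k / d
  have hb1 : b ≤ 1 := by linarith [one_lt_sqrt_two]
  have hcα : (2 - b) * α ≤ 2 := by nlinarith
  have h_factor : 1 - 2 * α + b * α = 1 - (2 - b) * α := by ring
  rw [negMulLog_mul_add_two_mul_negMulLog_sub_mul, h_factor]
  calc _ = negMulLog α * (1 - k) + α * k * (log d - log (2 * k)) + d * α * negMulLog (1 - b)
          + d / 2 * (negMulLog (1 - (2 - b) * α) - 2 * negMulLog (1 - α))
          + negMulLog (1 - α) := by
        linear_combination α / 2 * h_scale - negMulLog α / 2 * hdb
    _ ≤ negMulLog α * (1 - k) + α * k * (log d - log (2 * k)) + d * α * b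
          + d / 2 * (α ^ 3 - (2 - (2 - b)) * α) + α := by
        gcongr _ + d * α * ?_ + d / 2 * ?_ + ?_
        · exact negMulLog_one_sub_le hb1
        · exact negMulLog_one_sub_mul_sub_two_mul_le hc hα0 hα1 hcα
        · exact negMulLog_one_sub_le hα1
    _ = _ := by linear_combination α / 2 * hdb

end EntropyTerm

/-- For reals `2 ≤ k ≤ (1 - 1/√2) d` and `0 ≤ α ≤ 1`,
`(d/2)[h((2k/d)α) + 2h(α - (2k/d)α) + h(1 - 2α + (2k/d)α)] - (d-1)[h(α) + h(1-α)]`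
is at most `α(k log d + 1) + h(α)(1 - k) + (d/2)α³`. -/
theorem entropy_term_upper_bound (d k : ℝ) (hk : 2 ≤ k)
    (hkd : k ≤ (1 - 1 / Real.sqrt 2) * d) (α : ℝ) (hα0 : 0 ≤ α) (hα1 : α ≤ 1) :
    d / 2 * (h (2 * k / d * α) + 2 * h (α - 2 * k / d * α)
        + h (1 - 2 * α + 2 * k / d * α))
      - (d - 1) * (h α + h (1 - α))
      ≤ α * (k * Real.log d + 1) + h α * (1 - k) + d / 2 * α ^ 3 := by
  have h_log : 1 ≤ Real.log (2 * k) :=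
    (Real.le_log_iff_exp_le (by linarith)).2 (by linarith [Real.exp_one_lt_three])
  have h_correction : α * k * 1 ≤ α * k * Real.log (2 * k) := by gcongr
  linarith [entropy_term_upper_bound_general (by linarith) hkd hα0 hα1]

end
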